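/- Let R be a commutative noetherian ring and (C, W) a hereditary cotorsion pair cogenerated by a class P of pure-injective R-modules of finite injective dimension. Define φ : Spec R → ℤ_{≥0} by φ(p) = inf{i ∈ ℤ_{≥0} : k(p) ∈ C_(i)}. Then φ(p) ≤ depth(R_p) for every prime ideal p of R. -/

import Mathlib

open CategoryTheory Opposite

noncomputable section

/-- Vanishing of the `n`-th Ext group of two `R`-modules. -/
def extV (R : Type) [Ring R] (M N : ModuleCat.{0} R) (n : ℕ) : Prop :=
  Subsingleton (((_root_.Ext ℤ (ModuleCat.{0} R) n).obj (op M)).obj N)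

/-- The left `Ext^1`-orthogonal class. -/
def leftPerp1 (R : Type) [Ring R] (𝒳 : Set (ModuleCat.{0} R)) : Set (ModuleCat.{0} R) :=
  {M | ∀ X ∈ 𝒳, extV R M X 1}

/-- The right `Ext^1`-orthogonal class. -/
def rightPerp1 (R : Type) [Ring R] (𝒳 : Set (ModuleCat.{0} R)) : Set (ModuleCat.{0} R) :=
  {N | ∀ X ∈ 𝒳, extV R X N 1}

/-- `(𝒞, 𝒲)` is a cotorsion pair. -/
def IsCotorsionPair (R : Type) [Ring R] (𝒞 𝒲 : Set (ModuleCat.{0} R)) : Prop :=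
  𝒞 = leftPerp1 R 𝒲 ∧ 𝒲 = rightPerp1 R 𝒞

/-- `(𝒞, 𝒲)` is a hereditary cotorsion pair. -/
def IsHereditaryCotorsionPair (R : Type) [Ring R] (𝒞 𝒲 : Set (ModuleCat.{0} R)) : Prop :=
  IsCotorsionPair R 𝒞 𝒲 ∧ ∀ X ∈ 𝒞, ∀ Y ∈ 𝒲, ∀ i : ℕ, 1 ≤ i → extV R X Y i

/-- The class `𝒞_(i) = {M ∣ Ext^j(M, W) = 0 for all j > i and all W ∈ 𝒲}`. -/
def cotShift (R : Type) [Ring R] (𝒲 : Set (ModuleCat.{0} R)) (i : ℕ) : Set (ModuleCat.{0} R) :=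
  {M | ∀ Y ∈ 𝒲, ∀ j : ℕ, i < j → extV R M Y j}

/-- `f : A →ₗ[R] B` is a pure monomorphism. -/
def IsPureMono (R : Type) [CommRing R] {A B : Type} [AddCommGroup A] [Module R A]
    [AddCommGroup B] [Module R B] (f : A →ₗ[R] B) : Prop :=
  Function.Injective f ∧
    ∀ (Q : Type) [AddCommGroup Q] [Module R Q], Function.Injective (LinearMap.lTensor Q f)

/-- An `R`-module `N` is pure-injective if it is injective with respect to
pure monomorphisms. -/
def PureInjective (R : Type) [CommRing R] (N : Type) [AddCommGroup N] [Module R N] : Prop :=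
  ∀ (A B : Type) [AddCommGroup A] [Module R A] [AddCommGroup B] [Module R B]
    (f : A →ₗ[R] B), IsPureMono R f → ∀ g : A →ₗ[R] N, ∃ h : B →ₗ[R] N, h.comp f = g

/-- `N` has injective dimension at most `n`: all Ext-groups above degree `n` vanish. -/
def injDimLE (R : Type) [Ring R] (N : ModuleCat.{0} R) (n : ℕ) : Prop :=
  ∀ M : ModuleCat.{0} R, ∀ j : ℕ, n < j → extV R M N j

/-- The class of pure-injective `R`-modules of finite injective dimension. -/
def PIFinInj (R : Type) [CommRing R] : Set (ModuleCat.{0} R) :=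
  {N | PureInjective R ↥N ∧ ∃ n : ℕ, injDimLE R N n}

/-- The depth of a module over a commutative noetherian local ring, as the infimum of
the degrees in which `Ext(k, M)` does not vanish (`⊤` if all vanish). -/
def rdepth (A : Type) [CommRing A] [IsLocalRing A] (M : Type) [AddCommGroup M]
    [Module A M] : ℕ∞ :=
  sInf {n : ℕ∞ | ∃ i : ℕ, n = (i : ℕ∞) ∧
    ¬ extV A (ModuleCat.of A (IsLocalRing.ResidueField A)) (ModuleCat.of A M) i}

/-- The residue field `k(p)` of `R_p`, as an `R`-module. -/
abbrev resField (R : Type) [CommRing R] (p : PrimeSpectrum R) : Type :=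
  LocalizedModule p.asIdeal.primeCompl (R ⧸ p.asIdeal)

/-- `depth(R_p)`. -/
def ringDepthAt (R : Type) [CommRing R] (p : PrimeSpectrum R) : ℕ∞ :=
  rdepth (Localization.AtPrime p.asIdeal) (Localization.AtPrime p.asIdeal)

/-- `depth_{R_p}(M_p)`. -/
def depthAt (R : Type) [CommRing R] (p : PrimeSpectrum R) (M : Type) [AddCommGroup M]
    [Module R M] : ℕ∞ :=
  rdepth (Localization.AtPrime p.asIdeal) (LocalizedModule p.asIdeal.primeCompl M)

/-- `f : M →ₗ[R] E` exhibits `E` as an injective envelope of `M`: `E` is injective and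
`f` is an essential monomorphism. -/
def IsInjectiveEnvelope (R : Type) [Ring R] {M E : Type} [AddCommGroup M] [Module R M]
    [AddCommGroup E] [Module R E] (f : M →ₗ[R] E) : Prop :=
  Module.Injective R E ∧ Function.Injective f ∧
    ∀ K : Submodule R E, K ≠ ⊥ → K ⊓ LinearMap.range f ≠ ⊥

/-!
Write `A = R_p`, with residue field `k`, let `d` be its depth, and let `N` be a cotorsion module of
finite injective dimension; pure-injective modules are cotorsion. The isomorphism
`RHom_R(RHom_A(k, A), N) ≅ k ⊗ RHom_R(A, N)` suggests that the vanishing of `Ext_A^i(k, A)` for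
`i < d` forces `Ext_R^j(k, N) = 0` for `j > d`. An elementary version: let `K` be the `A`-dual of a
resolution of `k` by finite free modules. Its terms are flat over `R`, so `Ext_R^j(-, N)` vanishes
on them for `j > 0`. Its cohomology consists of finite-dimensional `k`-vector spaces, is zero below
degree `d` and nonzero in degree `d`. Assume that `Ext_R^l(k, N) = 0` for all `l > j + 1`, where
`j ≥ d`. Dimension shifting downwards from the injective dimension of `N` gives
`Ext_R^(j+1)(Z^d, N) = 0`, dimension shifting upwards from degree `0` gives
`Ext_R^j(B^d, N) = 0`, and `0 → B^d → Z^d → H^d → 0` then shows that `Ext_R^(j+1)(H^d, N) = 0`.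
As `k` is a direct summand of `H^d`, this permits descending induction on `j`.

Being in `𝒞_(d)` may be tested against the cogenerating class instead of `𝒲`, again by dimension
shifting.
-/

open Abelian Limits

universe w v u u'

section ExtVanishing

variable {C : Type u} [Category.{v} C] [Abelian C] [HasExt.{w} C] {N : C}

lemma subsingleton_ext_of_isZero {X : C} (hX : IsZero X) (n : ℕ) : Subsingleton (Ext X N n) :=
  subsingleton_of_forall_eq 0 fun x ↦ by
    rw [← Ext.mk₀_id_comp x, hX.eq_zero_of_src (𝟙 X), Ext.mk₀_zero, Ext.zero_comp]

lemma subsingleton_ext_of_id_eq_sum {ι : Type*} [Fintype ι] {X Z : C} (p : ι → (X ⟶ Z))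
    (q : ι → (Z ⟶ X)) (hpq : 𝟙 X = ∑ i, p i ≫ q i) {n : ℕ} (hZ : Subsingleton (Ext Z N n)) :
    Subsingleton (Ext X N n) :=
  subsingleton_of_forall_eq 0 fun x ↦ by
    have hx : x = ∑ i, (Ext.mk₀ (p i ≫ q i)).comp x (zero_add n) := by
      rw [← Ext.sum_comp, ← Ext.mk₀_sum, ← hpq, Ext.mk₀_id_comp]
    rw [hx]
    refine Finset.sum_eq_zero fun i _ ↦ ?_
    rw [← Ext.mk₀_comp_mk₀_assoc, Subsingleton.elim ((Ext.mk₀ (q i)).comp x (zero_add n)) 0,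
      Ext.comp_zero]

lemma subsingleton_ext_of_retract {X Z : C} (r : Retract X Z) {n : ℕ}
    (hZ : Subsingleton (Ext Z N n)) : Subsingleton (Ext X N n) :=
  subsingleton_ext_of_id_eq_sum (fun _ : Unit ↦ r.i) (fun _ ↦ r.r) (by simp) hZ

variable {S : ShortComplex C}

lemma subsingleton_ext_X₁ (hS : S.ShortExact) {n : ℕ} (h₂ : Subsingleton (Ext S.X₂ N n))
    (h₃ : Subsingleton (Ext S.X₃ N (n + 1))) : Subsingleton (Ext S.X₁ N n) :=
  subsingleton_of_forall_eq 0 fun x ↦ by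
    obtain ⟨y, rfl⟩ := Ext.contravariant_sequence_exact₁ hS N x (add_comm 1 n)
      (Subsingleton.elim _ _)
    rw [Subsingleton.elim y 0, Ext.comp_zero]

lemma subsingleton_ext_X₂ (hS : S.ShortExact) {n : ℕ} (h₁ : Subsingleton (Ext S.X₁ N n))
    (h₃ : Subsingleton (Ext S.X₃ N n)) : Subsingleton (Ext S.X₂ N n) :=
  subsingleton_of_forall_eq 0 fun x ↦ by
    obtain ⟨y, rfl⟩ := Ext.contravariant_sequence_exact₂ hS N x (Subsingleton.elim _ _)
    rw [Subsingleton.elim y 0, Ext.comp_zero]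

lemma subsingleton_ext_X₃ (hS : S.ShortExact) {n : ℕ} (h₁ : Subsingleton (Ext S.X₁ N n))
    (h₂ : Subsingleton (Ext S.X₂ N (n + 1))) : Subsingleton (Ext S.X₃ N (n + 1)) :=
  subsingleton_of_forall_eq 0 fun x ↦ by
    obtain ⟨y, rfl⟩ := Ext.contravariant_sequence_exact₃ hS N x (Subsingleton.elim _ _)
      (add_comm 1 n)
    rw [Subsingleton.elim y 0, Ext.comp_zero]

lemma subsingleton_ext_one_X₃ (hS : S.ShortExact) (h₂ : Subsingleton (Ext S.X₂ N 1))
    (hext : ∀ u : S.X₁ ⟶ N, ∃ v : S.X₂ ⟶ N, S.f ≫ v = u) : Subsingleton (Ext S.X₃ N 1) :=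
  subsingleton_of_forall_eq 0 fun x ↦ by
    obtain ⟨y, rfl⟩ := Ext.contravariant_sequence_exact₃ hS N x (Subsingleton.elim _ _)
      (add_comm 1 0)
    obtain ⟨u, rfl⟩ := (Ext.mk₀_bijective _ _).2 y
    obtain ⟨v, rfl⟩ := hext u
    rw [← Ext.mk₀_comp_mk₀]
    exact hS.extClass_comp_assoc _

end ExtVanishing

section BoundariesCyclesHomology

variable {C : Type u} [Category.{v} C] [Abelian C] (K : CochainComplex C ℕ)

/-- The coboundaries of `K` in degree `i`, as the kernel of the projection from cycles to
homology. -/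
abbrev boundaries (i : ℕ) : C := kernel (K.homologyπ i)

/-- The short complex `Bⁱ ⟶ Zⁱ ⟶ Hⁱ`, used for dimension shifting. -/
def boundariesCyclesHomology (i : ℕ) : ShortComplex C where
  X₁ := boundaries K i
  X₂ := K.cycles i
  X₃ := K.homology i
  f := kernel.ι _
  g := K.homologyπ i
  zero := kernel.condition _

/-- The short complex `Zⁱ ⟶ Kⁱ ⟶ Bⁱ⁺¹`, used for dimension shifting. -/
def cyclesXBoundaries (i : ℕ) : ShortComplex C where
  X₁ := K.cycles i
  X₂ := K.X i
  X₃ := boundaries K (i + 1)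
  f := K.iCycles i
  g := kernel.lift _ (K.toCycles i (i + 1)) (K.toCycles_comp_homologyπ i (i + 1))
  zero := by
    rw [← cancel_mono (kernel.ι _)]
    simp [← cancel_mono (K.iCycles (i + 1)), boundaries]

lemma boundariesCyclesHomology_shortExact (i : ℕ) : (boundariesCyclesHomology K i).ShortExact where
  exact := ShortComplex.exact_kernel _
  mono_f := equalizer.ι_mono
  epi_g := inferInstanceAs (Epi (K.homologyπ i))

lemma cyclesXBoundaries_shortExact (i : ℕ) : (cyclesXBoundaries K i).ShortExact where
  exact := ShortComplex.exact_of_f_is_kernel _ <|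
    isKernelOfComp (kernel.ι _ ≫ K.iCycles (i + 1)) _ (K.cyclesIsKernel i (i + 1) (by simp)) _
      (by simp [cyclesXBoundaries])
  mono_f := inferInstanceAs (Mono (K.iCycles i))
  epi_g := (ShortComplex.exact_iff_epi_kernel_lift
    (ShortComplex.mk _ _ (K.toCycles_comp_homologyπ i (i + 1)))).1
      (ShortComplex.exact_of_g_is_cokernel _ (K.homologyIsCokernel i (i + 1) (by simp)))

variable {K}

lemma isZero_boundaries_zero : IsZero (boundaries K 0) :=
  isZero_kernel_of_mono _

variable [HasExt.{w} C] {N : C}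

lemma subsingleton_ext_boundaries {d : ℕ} (hd : ∀ i < d, K.ExactAt i)
    (hX : ∀ i l, Subsingleton (Ext (K.X i) N (l + 1))) {i j : ℕ} (hid : i ≤ d) (hij : i ≤ j) :
    Subsingleton (Ext (boundaries K i) N j) := by
  induction i generalizing j with
  | zero => exact subsingleton_ext_of_isZero isZero_boundaries_zero j
  | succ i ih =>
    obtain ⟨j, rfl⟩ := Nat.exists_eq_succ_of_ne_zero (Nat.ne_zero_of_lt hij)
    have hcycles : Subsingleton (Ext (K.cycles i) N j) :=
      subsingleton_ext_X₂ (boundariesCyclesHomology_shortExact K i) (ih (by lia) (by lia))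
        (subsingleton_ext_of_isZero ((K.exactAt_iff_isZero_homology i).1 (hd i hid)) j)
    exact subsingleton_ext_X₃ (cyclesXBoundaries_shortExact K i) hcycles (hX i j)

lemma subsingleton_ext_cycles (m : ℕ) [HasInjectiveDimensionLT N m] {j : ℕ}
    (hX : ∀ i l, Subsingleton (Ext (K.X i) N (l + 1)))
    (hH : ∀ i l, j + 1 < l → Subsingleton (Ext (K.homology i) N l)) (i : ℕ) :
    Subsingleton (Ext (K.cycles i) N (j + 1)) := by
  induction j using Nat.strong_decreasing_induction generalizing i with
  | base => exact ⟨m, fun l hl _ i ↦ HasInjectiveDimensionLT.subsingleton N m _ (by lia) _⟩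
  | step j ih =>
    have hcycles : Subsingleton (Ext (K.cycles (i + 1)) N (j + 2)) :=
      ih (j + 1) (by lia) (fun i l hl ↦ hH i l (by lia)) (i + 1)
    have hboundaries : Subsingleton (Ext (boundaries K (i + 1)) N (j + 2)) :=
      subsingleton_ext_X₁ (boundariesCyclesHomology_shortExact K (i + 1)) hcycles
        (hH _ _ (by lia))
    exact subsingleton_ext_X₁ (cyclesXBoundaries_shortExact K i) (hX i j) hboundaries

lemma subsingleton_ext_homology (m : ℕ) [HasInjectiveDimensionLT N m] {d j : ℕ}
    (hd : ∀ i < d, K.ExactAt i) (hX : ∀ i l, Subsingleton (Ext (K.X i) N (l + 1)))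
    (hdj : d ≤ j) (hH : ∀ i l, j + 1 < l → Subsingleton (Ext (K.homology i) N l)) :
    Subsingleton (Ext (K.homology d) N (j + 1)) :=
  subsingleton_ext_X₃ (boundariesCyclesHomology_shortExact K d)
    (subsingleton_ext_boundaries hd hX le_rfl hdj) (subsingleton_ext_cycles m hX hH d)

end BoundariesCyclesHomology

section HomologyPi

variable {C : Type u} [Category.{v} C] [Abelian C] [HasExt.{w} C] {N : C}
  {A : Type*} [Ring A] {M V : ModuleCat.{u'} A} {ι : Type*} (G : ModuleCat.{u'} A ⥤ C)

lemma subsingleton_ext_of_linearEquiv_pi [Finite ι] [G.Additive] (e : V ≃ₗ[A] (ι → M)) {n : ℕ}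
    (hM : Subsingleton (Ext (G.obj M) N n)) : Subsingleton (Ext (G.obj V) N n) := by
  classical
  cases nonempty_fintype ι
  refine subsingleton_ext_of_id_eq_sum
    (fun i ↦ G.map (ModuleCat.ofHom (LinearMap.proj i ∘ₗ e.toLinearMap)))
    (fun i ↦ G.map (ModuleCat.ofHom (e.symm.toLinearMap ∘ₗ LinearMap.single A (fun _ ↦ M) i)))
    ?_ hM
  simp_rw [← G.map_comp, ← G.map_sum, ← G.map_id]
  congr 1
  ext x
  simp only [ModuleCat.hom_id, ModuleCat.hom_sum, ModuleCat.hom_comp, ModuleCat.hom_ofHom,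
    LinearMap.id_apply, LinearMap.sum_apply, LinearMap.comp_apply, LinearEquiv.coe_coe,
    LinearMap.proj_apply, LinearMap.single_apply]
  rw [← map_sum, Finset.univ_sum_single, e.symm_apply_apply]

lemma subsingleton_ext_of_pi_linearEquiv (e : V ≃ₗ[A] (ι → M)) (i : ι) {n : ℕ}
    (hV : Subsingleton (Ext (G.obj V) N n)) : Subsingleton (Ext (G.obj M) N n) := by
  classical
  have r : Retract M V :=
    { i := ModuleCat.ofHom (e.symm.toLinearMap ∘ₗ LinearMap.single A (fun _ ↦ M) i)
      r := ModuleCat.ofHom (LinearMap.proj i ∘ₗ e.toLinearMap)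
      retract := by ext; simp }
  exact subsingleton_ext_of_retract (r.map G) hV

theorem subsingleton_ext_of_homology_linearEquiv_pi [G.Additive] [G.PreservesHomology]
    (m : ℕ) [HasInjectiveDimensionLT N m] {K : CochainComplex (ModuleCat.{u'} A) ℕ} {d : ℕ}
    (hd : ∀ i < d, K.ExactAt i) (hd' : ¬ K.ExactAt d)
    (hX : ∀ i l, Subsingleton (Ext (G.obj (K.X i)) N (l + 1)))
    (hH : ∀ i, ∃ n : ℕ, Nonempty (K.homology i ≃ₗ[A] (Fin n → M))) {j : ℕ} (hdj : d ≤ j) :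
    Subsingleton (Ext (G.obj M) N (j + 1)) := by
  let GK := (G.mapHomologicalComplex _).obj K
  let isoH (i : ℕ) : GK.homology i ≅ G.obj (K.homology i) := (K.sc i).mapHomologyIso G
  have hGd (i : ℕ) (hi : i < d) : GK.ExactAt i := by
    rw [GK.exactAt_iff_isZero_homology, (isoH i).isZero_iff]
    exact G.map_isZero ((K.exactAt_iff_isZero_homology i).1 (hd i hi))
  obtain ⟨n, ⟨e⟩⟩ := hH d
  have hn : Nonempty (Fin n) := by
    by_contra! hempty
    rw [K.exactAt_iff_isZero_homology, ModuleCat.isZero_iff_subsingleton] at hd'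
    exact hd' e.toEquiv.subsingleton
  induction j using Nat.strong_decreasing_induction with
  | base => exact ⟨m, fun l hl _ ↦ HasInjectiveDimensionLT.subsingleton N m _ (by lia) _⟩
  | step j ih =>
    have hGH (i l : ℕ) (hl : j + 1 < l) : Subsingleton (Ext (GK.homology i) N l) := by
      obtain ⟨l, rfl⟩ := Nat.exists_eq_succ_of_ne_zero (Nat.ne_zero_of_lt hl)
      obtain ⟨_, ⟨e⟩⟩ := hH i
      exact subsingleton_ext_of_retract (.ofIso (isoH i))
        (subsingleton_ext_of_linearEquiv_pi G e (ih l (by lia) (by lia)))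
    exact subsingleton_ext_of_pi_linearEquiv G e hn.some <|
      subsingleton_ext_of_retract (.ofIso (isoH d).symm) <|
        subsingleton_ext_homology m hGd hX hdj hGH

end HomologyPi

section Cotorsion

lemma lTensor_injective_of_shortExact {R : Type u} [CommRing R]
    {S : ShortComplex (ModuleCat.{u} R)} (hS : S.ShortExact) [Module.Flat R S.X₃] (Q : Type u)
    [AddCommGroup Q] [Module R Q] : Function.Injective (S.f.hom.lTensor Q) :=
  LinearMap.lTensor_injective_of_exact_of_flat S.g.hom hS.moduleCat_surjective_g S.f.hom
    hS.moduleCat_injective_f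
    ((ShortComplex.ShortExact.moduleCat_exact_iff_function_exact S).1 hS.exact) Q

lemma flat_X₁_of_shortExact {R : Type u} [CommRing R] {S : ShortComplex (ModuleCat.{u} R)}
    (hS : S.ShortExact) [Module.Flat R S.X₂] [Module.Flat R S.X₃] : Module.Flat R S.X₁ := by
  refine Module.Flat.iff_rTensor_injective'.2 fun I ↦ ?_
  have hcomp : Function.Injective (S.f.hom.lTensor R ∘ₗ I.subtype.rTensor S.X₁) := by
    rw [LinearMap.lTensor_comp_rTensor, ← LinearMap.rTensor_comp_lTensor]
    exact (Module.Flat.rTensor_preserves_injective_linearMap I.subtype I.injective_subtype).comp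
      (lTensor_injective_of_shortExact hS I)
  exact Function.Injective.of_comp (f := S.f.hom.lTensor R) hcomp

instance projective_projectiveShortComplex_X₂ {R : Type u} [Ring R] (M : ModuleCat.{u} R) :
    Projective M.projectiveShortComplex.X₂ :=
  (IsProjective.iff_projective (R := R) (M →₀ Shrink.{u} R)).1 inferInstance

/-- Enochs cotorsion modules: `Ext¹(F, N) = 0` for every flat module `F`. -/
def IsCotorsion {R : Type u} [CommRing R] (N : ModuleCat.{u} R) : Prop :=
  ∀ F : ModuleCat.{u} R, Module.Flat R F → Subsingleton (Ext F N 1)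

lemma IsCotorsion.subsingleton_ext {R : Type u} [CommRing R] {N : ModuleCat.{u} R}
    (hN : IsCotorsion N) (F : ModuleCat.{u} R) [Module.Flat R F] (n : ℕ) :
    Subsingleton (Ext F N (n + 1)) := by
  induction n generalizing F with
  | zero => exact hN F inferInstance
  | succ n ih =>
    have hS := F.shortExact_projectiveShortComplex
    have : Module.Flat R F.projectiveShortComplex.X₃ := ‹Module.Flat R F›
    have := flat_X₁_of_shortExact hS
    exact subsingleton_ext_X₃ hS (ih _) (Ext.subsingleton_of_projective _ _ _)

lemma PureInjective.isCotorsion {R : Type} [CommRing R] {N : ModuleCat.{0} R}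
    (hN : PureInjective R N) : IsCotorsion N := fun F hF ↦ by
  have hS := F.shortExact_projectiveShortComplex
  refine subsingleton_ext_one_X₃ hS (Ext.subsingleton_of_projective _ _ _) fun u ↦ ?_
  have hpure : IsPureMono R F.projectiveShortComplex.f.hom :=
    ⟨hS.moduleCat_injective_f, fun Q _ _ ↦ lTensor_injective_of_shortExact hS Q⟩
  obtain ⟨v, hv⟩ := hN _ _ _ hpure u.hom
  exact ⟨ModuleCat.ofHom v, ModuleCat.hom_ext hv⟩

end Cotorsion

section FiniteResolution

lemma projective_fgModuleCat_of {A : Type u} [CommRing A] [IsNoetherianRing A] (M : Type u)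
    [AddCommGroup M] [Module A M] [Module.Finite A M] [Module.Projective A M] :
    Projective (FGModuleCat.of A M) where
  factors {E X} f e he := by
    have hsurj : Function.Surjective e.hom.hom := (ModuleCat.epi_iff_surjective _).1
      (inferInstanceAs (Epi ((forget₂ (FGModuleCat A) (ModuleCat A)).map e)))
    obtain ⟨h, hh⟩ := Module.projective_lifting_property e.hom.hom f.hom.hom hsurj
    exact ⟨FGModuleCat.ofHom h, by ext x; exact LinearMap.congr_fun hh x⟩

lemma exists_epi_fgModuleCat_of_fin {A : Type u} [CommRing A] (M : FGModuleCat.{u} A) :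
    ∃ (n : ℕ) (f : FGModuleCat.of A (Fin n → A) ⟶ M), Epi f := by
  obtain ⟨n, f, hf⟩ := Module.Finite.exists_fin' A M
  have : Epi ((forget₂ (FGModuleCat A) (ModuleCat A)).map (FGModuleCat.ofHom f)) :=
    (ModuleCat.epi_iff_surjective _).2 hf
  exact ⟨n, _, (forget₂ (FGModuleCat A) (ModuleCat A)).epi_of_epi_map this⟩

variable {A : Type u} [CommRing A] [IsNoetherianRing A]

instance enoughProjectives_fgModuleCat : EnoughProjectives (FGModuleCat.{u} A) where
  presentation M := by
    obtain ⟨n, f, hf⟩ := exists_epi_fgModuleCat_of_fin M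
    exact ⟨{ p := FGModuleCat.of A (Fin n → A), projective := projective_fgModuleCat_of _, f }⟩

instance preservesProjectiveObjects_forget₂_fgModuleCat :
    (forget₂ (FGModuleCat.{u} A) (ModuleCat.{u} A)).PreservesProjectiveObjects where
  projective_obj {P} hP := by
    obtain ⟨n, f, hf⟩ := exists_epi_fgModuleCat_of_fin P
    have hfree : Projective
        ((forget₂ (FGModuleCat.{u} A) (ModuleCat.{u} A)).obj (FGModuleCat.of A (Fin n → A))) :=
      (IsProjective.iff_projective (R := A) (Fin n → A)).1 inferInstance
    have hr : Retract P (FGModuleCat.of A (Fin n → A)) :=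
      { i := Projective.factorThru (𝟙 P) f, r := f }
    exact (hr.map (forget₂ _ (ModuleCat A))).projective

lemma exists_projectiveResolution_finite (M : ModuleCat.{u} A) [Module.Finite A M] :
    ∃ P : ProjectiveResolution M, ∀ i, Module.Finite A (P.complex.X i) :=
  let Q := ProjectiveResolution.of (FGModuleCat.of A M)
  ⟨(forget₂ (FGModuleCat A) (ModuleCat A)).mapProjectiveResolution Q,
    fun i ↦ inferInstanceAs (Module.Finite A (Q.complex.X i))⟩

end FiniteResolution

section ExtOfResolution

variable {C : Type u} [Category.{v} C] [Abelian C]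

lemma prev_up_nat (i : ℕ) : (ComplexShape.up ℕ).prev i = i - 1 := by
  cases i <;> simp

lemma linearYonedaObj_exactAt_iff (K : ChainComplex C ℕ) (S : Type*) [Ring S] [Linear S C] (Y : C)
    (i : ℕ) : (K.linearYonedaObj S Y).ExactAt i ↔
      ∀ f : K.X i ⟶ Y, K.d (i + 1) i ≫ f = 0 → ∃ g : K.X (i - 1) ⟶ Y, K.d i (i - 1) ≫ g = f := by
  rw [HomologicalComplex.exactAt_iff' _ (i - 1) i (i + 1) (prev_up_nat i) (by simp),
    ShortComplex.moduleCat_exact_iff]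
  rfl

lemma subsingleton_hom_iff_of_isColimit {X X' : C} {g : X ⟶ X'} {c : CokernelCofork g}
    (hc : IsColimit c) (Y : C) :
    Subsingleton (c.pt ⟶ Y) ↔ ∀ f : X' ⟶ Y, g ≫ f = 0 → f = 0 := by
  refine ⟨fun h f hf ↦ ?_, fun h ↦ subsingleton_of_forall_eq 0 fun u ↦ ?_⟩
  · obtain ⟨u, rfl⟩ := CokernelCofork.IsColimit.desc' hc f hf
    rw [Subsingleton.elim u 0, comp_zero]
  · refine Cofork.IsColimit.hom_ext hc ?_
    rw [comp_zero]
    exact h _ (by rw [c.condition_assoc, zero_comp])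

lemma subsingleton_ext_iff_exactAt [HasExt.{w} C] {M : C} (P : ProjectiveResolution M)
    (S : Type*) [Ring S] [Linear S C] (Y : C) (n : ℕ) :
    Subsingleton (Ext M Y n) ↔ (P.complex.linearYonedaObj S Y).ExactAt n := by
  rw [linearYonedaObj_exactAt_iff]
  cases n with
  | zero =>
    have hM : Subsingleton (M ⟶ Y) ↔ _ :=
      subsingleton_hom_iff_of_isColimit P.isColimitCokernelCofork Y
    simpa [Ext.homEquiv₀.subsingleton_congr, eq_comm] using hM
  | succ n =>
    refine ⟨fun h f hf ↦ (P.extMk_eq_zero_iff f (n + 2) rfl hf n rfl).1 (Subsingleton.elim _ _),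
      fun h ↦ subsingleton_of_forall_eq 0 fun x ↦ ?_⟩
    obtain ⟨f, hf, rfl⟩ := P.extMk_surjective x (n + 2) rfl
    exact (P.extMk_eq_zero_iff f (n + 2) rfl hf n rfl).2 (h f hf)

lemma extV_iff {R : Type} [Ring R] {M N : ModuleCat.{0} R} {n : ℕ} :
    extV R M N n ↔ Subsingleton (Abelian.Ext M N n) := by
  let P := ProjectiveResolution.of M
  rw [subsingleton_ext_iff_exactAt P ℤ, HomologicalComplex.exactAt_iff_isZero_homology,
    ← (P.isoExt n N).isZero_iff, ModuleCat.isZero_iff_subsingleton]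
  rfl

-- Multiplication by `a` on a projective resolution lifts the zero map, so it is null-homotopic.
lemma exists_d_comp_eq_smul {A : Type*} [CommRing A] [Linear A C] {M : C}
    (P : ProjectiveResolution M) {Y : C} {a : A} (ha : a • 𝟙 M = 0) {i : ℕ}
    {f : P.complex.X i ⟶ Y} (hf : P.complex.d (i + 1) i ≫ f = 0) :
    ∃ g : P.complex.X (i - 1) ⟶ Y, P.complex.d i (i - 1) ≫ g = a • f := by
  have hπ : (a • 𝟙 P.complex) ≫ P.π = 0 := by
    refine HomologicalComplex.to_single_hom_ext ?_
    have hsingle : a • 𝟙 (((ChainComplex.single₀ C).obj M).X 0) = 0 := ha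
    calc ((a • 𝟙 P.complex) ≫ P.π).f 0 = a • P.π.f 0 := by simp
      _ = P.π.f 0 ≫ (a • 𝟙 _) := by rw [Linear.comp_smul, Category.comp_id]
      _ = 0 := by rw [hsingle, comp_zero]
  have h := ProjectiveResolution.liftHomotopyZero _ hπ
  have hcomm : a • 𝟙 (P.complex.X i) = P.complex.d i (i - 1) ≫ h.hom (i - 1) i +
      h.hom i (i + 1) ≫ P.complex.d (i + 1) i := by
    rw [← dNext_nat, ← prevD_eq _ (show (ComplexShape.down ℕ).Rel (i + 1) i from rfl)]
    simpa using h.comm i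
  refine ⟨h.hom (i - 1) i ≫ f, ?_⟩
  simpa [hf] using (congrArg (· ≫ f) hcomm).symm

end ExtOfResolution

section DualOfResolution

lemma smul_homology_eq_zero {A : Type*} [CommRing A] {K : CochainComplex (ModuleCat.{v} A) ℕ}
    {a : A} {i : ℕ} (ha : ∀ f : K.X i, K.d i (i + 1) f = 0 → ∃ g, K.d (i - 1) i g = a • f)
    (y : K.homology i) : a • y = 0 := by
  obtain ⟨z, rfl⟩ := (ModuleCat.epi_iff_surjective (K.homologyπ i)).1 inferInstance y
  obtain ⟨g, hg⟩ := ha (K.iCycles i z) (by rw [← ConcreteCategory.comp_apply, K.iCycles_d]; rfl)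
  have hz : a • z = K.toCycles (i - 1) i g := by
    refine (ModuleCat.mono_iff_injective (K.iCycles i)).1 inferInstance ?_
    rw [map_smul, ← hg, ← ConcreteCategory.comp_apply, K.toCycles_i]
  rw [← map_smul, hz, ← ConcreteCategory.comp_apply, K.toCycles_comp_homologyπ]
  rfl

lemma finite_homology {A : Type*} [Ring A] [IsNoetherianRing A]
    (K : CochainComplex (ModuleCat.{v} A) ℕ) (i : ℕ) [Module.Finite A (K.X i)] :
    Module.Finite A (K.homology i) :=
  have : Module.Finite A (K.cycles i) := .of_injective (K.iCycles i).hom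
    ((ModuleCat.mono_iff_injective _).1 inferInstance)
  .of_surjective (K.homologyπ i).hom ((ModuleCat.epi_iff_surjective _).1 inferInstance)

lemma exists_linearEquiv_pi_residueField {A : Type*} [CommRing A] [IsLocalRing A] {V : Type*}
    [AddCommGroup V] [Module A V] [Module.Finite A V]
    (hV : ∀ a ∈ IsLocalRing.maximalIdeal A, ∀ x : V, a • x = 0) :
    ∃ n : ℕ, Nonempty (V ≃ₗ[A] (Fin n → IsLocalRing.ResidueField A)) := by
  have hT : Module.IsTorsionBySet A V (IsLocalRing.maximalIdeal A) := fun x a ↦ hV a a.2 x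
  let : Module (IsLocalRing.ResidueField A) V := hT.module
  have : IsScalarTower A (IsLocalRing.ResidueField A) V := hT.isScalarTower
  have : Module.Finite (IsLocalRing.ResidueField A) V := .of_restrictScalars_finite A _ _
  exact ⟨_, ⟨(Module.finBasis (IsLocalRing.ResidueField A) V).equivFun.restrictScalars A⟩⟩

lemma flat_restrictScalars_obj {R A : Type*} [CommRing R] [CommRing A] [Algebra R A]
    [Module.Flat R A] (M : ModuleCat.{v} A) [Module.Flat A M] :
    Module.Flat R ((ModuleCat.restrictScalars (algebraMap R A)).obj M) := by
  let : Module R M := Module.compHom M (algebraMap R A)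
  have : IsScalarTower R A M := .of_compHom R A M
  exact Module.Flat.trans R A M

variable {A : Type u} [CommRing A] {M : ModuleCat.{u} A} (P : ProjectiveResolution M) (i : ℕ)

instance finite_linearYonedaObj_X [Module.Finite A (P.complex.X i)] :
    Module.Finite A ((P.complex.linearYonedaObj A (.of A A)).X i) :=
  have : Module.Projective A (P.complex.X i) := (IsProjective.iff_projective _).2 (P.projective i)
  let e : (P.complex.X i ⟶ .of A A) ≃ₗ[A] Module.Dual A (P.complex.X i) := ModuleCat.homLinearEquiv
  have : Module.Finite A (P.complex.X i ⟶ .of A A) := .equiv e.symm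
  this

instance flat_linearYonedaObj_X [Module.Finite A (P.complex.X i)] :
    Module.Flat A ((P.complex.linearYonedaObj A (.of A A)).X i) :=
  have : Module.Projective A (P.complex.X i) := (IsProjective.iff_projective _).2 (P.projective i)
  let e : (P.complex.X i ⟶ .of A A) ≃ₗ[A] Module.Dual A (P.complex.X i) := ModuleCat.homLinearEquiv
  have : Module.Flat A (P.complex.X i ⟶ .of A A) := .of_linearEquiv e
  this

open IsLocalRing in
lemma exists_homology_linearYonedaObj_linearEquiv_pi [IsLocalRing A] [IsNoetherianRing A]
    (P : ProjectiveResolution (ModuleCat.of A (ResidueField A)))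
    [Module.Finite A (P.complex.X i)] :
    ∃ n : ℕ, Nonempty ((P.complex.linearYonedaObj A (.of A A)).homology i ≃ₗ[A]
      (Fin n → ResidueField A)) := by
  have := finite_homology (P.complex.linearYonedaObj A (.of A A)) i
  refine exists_linearEquiv_pi_residueField fun a ha ↦
    smul_homology_eq_zero fun f hf ↦ exists_d_comp_eq_smul P (a := a) ?_ hf
  ext x
  change a • x = 0
  rw [Algebra.smul_def, ResidueField.algebraMap_eq, (residue_eq_zero_iff a).2 ha, zero_mul]

end DualOfResolution

section ResidueField

open IsLocalRing

theorem subsingleton_ext_residueField {R A : Type u} [CommRing R] [CommRing A] [Algebra R A]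
    [Module.Flat R A] [IsLocalRing A] [IsNoetherianRing A] {N : ModuleCat.{u} R} (m : ℕ)
    [HasInjectiveDimensionLT N m] (hN : IsCotorsion N) {d : ℕ}
    (hd : ∀ i < d, Subsingleton (Ext (ModuleCat.of A (ResidueField A)) (.of A A) i))
    (hd' : ¬ Subsingleton (Ext (ModuleCat.of A (ResidueField A)) (.of A A) d)) {j : ℕ}
    (hdj : d ≤ j) :
    Subsingleton (Ext ((ModuleCat.restrictScalars (algebraMap R A)).obj (.of A (ResidueField A)))
      N (j + 1)) := by
  obtain ⟨P, hP⟩ := exists_projectiveResolution_finite (ModuleCat.of A (ResidueField A))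
  simp_rw [subsingleton_ext_iff_exactAt P A] at hd hd'
  have hflat (i : ℕ) := flat_restrictScalars_obj (R := R)
    ((P.complex.linearYonedaObj A (.of A A)).X i)
  exact subsingleton_ext_of_homology_linearEquiv_pi (M := .of A (ResidueField A)) _ m hd hd'
    (fun _ ↦ hN.subsingleton_ext _) (exists_homology_linearYonedaObj_linearEquiv_pi · P) hdj

lemma algebraMapSubmonoid_quotient_primeCompl {R : Type*} [CommRing R] (p : Ideal R) [p.IsPrime] :
    Algebra.algebraMapSubmonoid (R ⧸ p) p.primeCompl = nonZeroDivisors (R ⧸ p) := by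
  have : (⊥ : Ideal (R ⧸ p)).LiesOver p := ⟨by simp [← RingHom.ker_eq_comap_bot]⟩
  rw [Ideal.algebraMapSubmonoid_primeCompl_of_liesOver_surjective (p := p) (P := ⊥)
    Ideal.Quotient.mk_surjective, Ideal.primeCompl_bot]

instance isLocalizedModule_quotient_residueField {R : Type*} [CommRing R] (p : Ideal R)
    [p.IsPrime] : IsLocalizedModule p.primeCompl
      (IsScalarTower.toAlgHom R (R ⧸ p) p.ResidueField).toLinearMap := by
  rw [isLocalizedModule_iff_isLocalization, algebraMapSubmonoid_quotient_primeCompl]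
  infer_instance

/-- `resField R p`, a localization of `R ⧸ p`, is the residue field of `R_p` with scalars restricted
to `R`. -/
def resFieldIso (R : Type) [CommRing R] (p : PrimeSpectrum R) :
    ModuleCat.of R (resField R p) ≅
      (ModuleCat.restrictScalars (algebraMap R (Localization.AtPrime p.asIdeal))).obj
        (.of _ (ResidueField (Localization.AtPrime p.asIdeal))) :=
  let e := IsLocalizedModule.iso p.asIdeal.primeCompl
    (IsScalarTower.toAlgHom R (R ⧸ p.asIdeal) p.asIdeal.ResidueField).toLinearMap
  let k := (ModuleCat.restrictScalars (algebraMap R (Localization.AtPrime p.asIdeal))).obj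
      (.of _ (ResidueField (Localization.AtPrime p.asIdeal)))
  let e' : resField R p ≃ₗ[R] k :=
    { e with
      map_smul' := fun r x ↦ (e.map_smul r x).trans
        (algebraMap_smul (Localization.AtPrime p.asIdeal) r (e x)).symm }
  e'.toModuleIso

end ResidueField

section CotorsionPair

lemma hasInjectiveDimensionLT_of_injDimLE {R : Type} [Ring R] {N : ModuleCat.{0} R} {n : ℕ}
    (hN : injDimLE R N n) : HasInjectiveDimensionLT N (n + 1) :=
  .mk fun i hi M _ ↦ (extV_iff.1 (hN M i hi)).elim _ _

lemma mem_cotShift_of_leftPerp1_subset {R : Type} [Ring R] {𝒲 Pcl : Set (ModuleCat.{0} R)}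
    (hW : leftPerp1 R Pcl ⊆ cotShift R 𝒲 0) {d : ℕ} {M : ModuleCat.{0} R}
    (hM : ∀ N ∈ Pcl, extV R M N (d + 1)) :
    M ∈ cotShift R 𝒲 d := by
  induction d generalizing M with
  | zero => exact hW hM
  | succ d ih =>
    have hS := M.shortExact_projectiveShortComplex
    have hsyzygy : M.projectiveShortComplex.X₁ ∈ cotShift R 𝒲 d := ih fun N hN ↦
      extV_iff.2 <| subsingleton_ext_X₁ hS (Ext.subsingleton_of_projective _ _ _)
        (extV_iff.1 (hM N hN))
    intro W hWmem j hj
    obtain ⟨j, rfl⟩ : ∃ l, j = l + 2 := Nat.exists_eq_add_of_le' (by lia)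
    exact extV_iff.2 <| subsingleton_ext_X₃ hS
      (extV_iff.1 (hsyzygy W hWmem (j + 1) (by lia))) (Ext.subsingleton_of_projective _ _ _)

lemma exists_natCast_eq_sInf {q : ℕ → Prop}
    (h : sInf {n : ℕ∞ | ∃ i : ℕ, n = i ∧ q i} ≠ ⊤) :
    ∃ d : ℕ, sInf {n : ℕ∞ | ∃ i : ℕ, n = i ∧ q i} = d ∧ q d ∧ ∀ i < d, ¬ q i := by
  have hne : {n : ℕ∞ | ∃ i : ℕ, n = i ∧ q i}.Nonempty :=
    Set.nonempty_iff_ne_empty.2 fun hempty ↦ h (hempty ▸ sInf_empty)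
  obtain ⟨d, hd, hqd⟩ := csInf_mem hne
  refine ⟨d, hd, hqd, fun i hi hqi ↦ ?_⟩
  have hle : (d : ℕ∞) ≤ i := hd ▸ sInf_le ⟨i, rfl, hqi⟩
  exact hi.not_ge (Nat.cast_le.1 hle)

theorem stmt14_general {R : Type} [CommRing R] {𝒲 Pcl : Set (ModuleCat.{0} R)}
    (hW : leftPerp1 R Pcl ⊆ cotShift R 𝒲 0) (hcot : ∀ N ∈ Pcl, IsCotorsion N)
    (hdim : ∀ N ∈ Pcl, ∃ n, injDimLE R N n)
    (p : PrimeSpectrum R) [IsNoetherianRing (Localization.AtPrime p.asIdeal)] :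
    sInf {n : ℕ∞ | ∃ i : ℕ, n = (i : ℕ∞) ∧
      ModuleCat.of R (resField R p) ∈ cotShift R 𝒲 i} ≤ ringDepthAt R p := by
  by_cases htop : ringDepthAt R p = ⊤
  · exact htop ▸ le_top
  obtain ⟨d, hd, hne, hlt⟩ := exists_natCast_eq_sInf htop
  simp_rw [not_not, extV_iff] at hlt hne
  rw [ringDepthAt, rdepth, hd]
  refine sInf_le ⟨d, rfl, mem_cotShift_of_leftPerp1_subset hW fun N hN ↦ extV_iff.2 ?_⟩
  obtain ⟨n, hn⟩ := hdim N hN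
  have := hasInjectiveDimensionLT_of_injDimLE hn
  have := IsLocalization.flat (Localization.AtPrime p.asIdeal) p.asIdeal.primeCompl
  exact subsingleton_ext_of_retract (.ofIso (resFieldIso R p))
    (subsingleton_ext_residueField (n + 1) (hcot N hN) hlt hne le_rfl)

end CotorsionPair

/-- let `(𝒞, 𝒲)` be a hereditary cotorsion pair over a commutative
noetherian ring cogenerated by a class of pure-injective modules of finite injective
dimension, and let `φ(p) = inf {i ∣ k(p) ∈ 𝒞_(i)}`. Then `φ(p) ≤ depth(R_p)` for
every prime `p`. -/
theorem stmt14 (R : Type) [CommRing R] [IsNoetherianRing R]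
    (𝒞 𝒲 Pcl : Set (ModuleCat.{0} R))
    (hpair : IsHereditaryCotorsionPair R 𝒞 𝒲)
    (hP : Pcl ⊆ PIFinInj R)
    (hcogen : 𝒞 = leftPerp1 R Pcl) :
    ∀ p : PrimeSpectrum R,
      sInf {n : ℕ∞ | ∃ i : ℕ, n = (i : ℕ∞) ∧
        ModuleCat.of R (resField R p) ∈ cotShift R 𝒲 i} ≤ ringDepthAt R p := fun p ↦
  stmt14_general (hcogen ▸ hpair.2) (fun _ hN ↦ (hP hN).1.isCotorsion) (fun _ hN ↦ (hP hN).2) p
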